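/- Let p be a prime and G a finite p-group such that CD(G) is a quasi-antichain of width w ≥ 3 with G ∈ CD(G), and let a be the positive integer with |G/Z(G)| = p^{2a}. Let t be the number of abelian atoms of CD(G). If t ≥ 3 then t ≥ p + 1. -/

import Mathlib

/-- The Chermak-Delgado measure of a subgroup `H` of a finite group `G`:
`m_G(H) = |H| · |C_G(H)|`. -/
noncomputable def CDmeasure {G : Type*} [Group G] (H : Subgroup G) : ℕ :=
  Nat.card H * Nat.card (Subgroup.centralizer (H : Set G))

/-- `H` belongs to the Chermak-Delgado lattice of `G`: its measure is maximal. -/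
def inCD {G : Type*} [Group G] (H : Subgroup G) : Prop :=
  ∀ K : Subgroup G, CDmeasure K ≤ CDmeasure H

/-- `CD(G)` is a quasi-antichain of width `w` with `G ∈ CD(G)`. -/
def IsQACD (G : Type*) [Group G] (w : ℕ) : Prop :=
  inCD (⊤ : Subgroup G) ∧ inCD (Subgroup.center G) ∧
  (∀ K : Subgroup G, inCD K → Subgroup.center G ≤ K) ∧
  (∀ K K' : Subgroup G, inCD K → inCD K' →
    Subgroup.center G < K → K ≤ K' → K' < ⊤ → K = K') ∧
  {K : Subgroup G | inCD K ∧ Subgroup.center G < K ∧ K < ⊤}.ncard = w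

/-- The set of abelian atoms of the quasi-antichain `CD(G)`. -/
def abelianAtoms (G : Type*) [Group G] : Set (Subgroup G) :=
  {K : Subgroup G | inCD K ∧ Subgroup.center G < K ∧ K < ⊤ ∧ ∀ x y : K, x * y = y * x}


/-
The abelian atoms are abelian normal subgroups, any two of which meet in `Z(G)` and have product
`G`. Given three of them, `A`, `B` and `C`, we have `G/Z(G) = A/Z(G) × B/Z(G)`, and `C/Z(G)` is the
graph of an isomorphism `φ : A/Z(G) → B/Z(G)`. Since the commutators of `A` and `B` are central,
they are bilinear, so that `C` being abelian forces the preimage of the graph of `x ↦ φ x ^ i` to be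
abelian too; it is again a complement of `B` modulo `Z(G)`, hence an abelian atom. For `i < q`,
where `q` is the least prime factor of `|G/Z(G)|`, these preimages are distinct, because nonzero
differences of exponents are coprime to `|G/Z(G)|`. Together with `B` they are `q + 1` atoms.
-/

open scoped Pointwise commutatorElement

section

variable {G : Type*} [Group G]

lemma card_mul_card_eq_ncard_mul_mul_card_inf (A B : Subgroup G) :
    Nat.card A * Nat.card B = ((A : Set G) * (B : Set G)).ncard * Nat.card ↥(A ⊓ B) := by
  have smul_one (a : A) : a • ((1 : G) : G ⧸ B) = ((a : G) : G ⧸ B) :=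
    congrArg QuotientGroup.mk (mul_one (a : G))
  have orbit_eq : MulAction.orbit A ((1 : G) : G ⧸ B) = (QuotientGroup.mk : G → G ⧸ B) '' A := by
    ext x
    simp only [MulAction.mem_orbit_iff, smul_one, Subtype.exists, Set.mem_image, SetLike.mem_coe,
      exists_prop]
  have stabilizer_eq : MulAction.stabilizer A ((1 : G) : G ⧸ B) = B.subgroupOf A := by
    ext a
    rw [MulAction.mem_stabilizer_iff, smul_one, eq_comm, QuotientGroup.eq, inv_one, one_mul,
      Subgroup.mem_subgroupOf]
  have card_mul : ((A : Set G) * (B : Set G)).ncard = Nat.card B * B.relIndex A := by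
    rw [← QuotientGroup.preimage_image_mk_eq_mul, ← Nat.card_coe_set_eq,
      QuotientGroup.card_preimage_mk, Nat.card_coe_set_eq, ← orbit_eq, ← MulAction.index_stabilizer,
      stabilizer_eq, Subgroup.relIndex]
  have card_left : Nat.card A = B.relIndex A * Nat.card ↥(A ⊓ B) := by
    rw [← Subgroup.inf_relIndex_left, mul_comm, ← Subgroup.relIndex_bot_left (A ⊓ B),
      Subgroup.relIndex_mul_relIndex _ _ _ bot_le inf_le_left, Subgroup.relIndex_bot_left]
  rw [card_mul, card_left, mul_comm _ (Nat.card B), mul_assoc]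

lemma mem_of_pow_mem_of_pow_mem_of_coprime {H : Subgroup G} {g : G} {m n : ℕ}
    (hmn : m.Coprime n) (hm : g ^ m ∈ H) (hn : g ^ n ∈ H) : g ∈ H := by
  obtain ⟨u, v, huv⟩ := Nat.isCoprime_iff_coprime.2 hmn
  have hg : (g ^ m) ^ u * (g ^ n) ^ v = g := by
    rw [← zpow_natCast, ← zpow_natCast, ← zpow_mul, ← zpow_mul, ← zpow_add, mul_comm (m : ℤ),
      mul_comm (n : ℤ), huv, zpow_one]
  exact hg ▸ H.mul_mem (H.zpow_mem hm u) (H.zpow_mem hn v)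

lemma not_le_of_mul_eq_univ {H K : Subgroup G} (hH : H ≠ ⊤)
    (hHK : (H : Set G) * (K : Set G) = Set.univ) : ¬ K ≤ H := by
  intro hKH
  refine hH (Subgroup.coe_eq_univ.1 (Set.eq_univ_of_univ_subset ?_))
  calc Set.univ = (H : Set G) * (K : Set G) := hHK.symm
    _ ⊆ (H : Set G) * (H : Set G) := Set.mul_subset_mul_left hKH
    _ = H := coe_mul_coe H

lemma mul_subset_centralizer_inf (A B : Subgroup G) [IsMulCommutative A] [IsMulCommutative B] :
    (A : Set G) * (B : Set G) ⊆ Subgroup.centralizer ((A ⊓ B : Subgroup G) : Set G) := by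
  rintro _ ⟨a, ha, b, hb, rfl⟩
  exact Subgroup.mul_mem _
    (Subgroup.centralizer_le inf_le_left (A.le_centralizer ha))
    (Subgroup.centralizer_le inf_le_right (B.le_centralizer hb))

lemma mem_of_mul_map_conj_eq_univ {H : Subgroup G} {g : G}
    (h : (H : Set G) * (H.map (MulAut.conj g).toMonoidHom : Set G) = Set.univ) : g ∈ H := by
  obtain ⟨x, hx, _, ⟨y, hy, rfl⟩, hxy⟩ := Set.mem_mul.1 (h ▸ Set.mem_univ g⁻¹)
  have hg : g = x⁻¹ * y⁻¹ := by
    have hxgy : x * (g * y) = 1 := by simpa [← mul_assoc] using hxy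
    rw [eq_mul_inv_iff_mul_eq, eq_inv_iff_mul_eq_one, mul_eq_one_comm, hxgy]
  exact hg ▸ H.mul_mem (H.inv_mem hx) (H.inv_mem hy)

lemma commutatorElement_pow_left {x y : G} (h : ⁅x, y⁆ ∈ Subgroup.center G) (n : ℕ) :
    ⁅x ^ n, y⁆ = ⁅x, y⁆ ^ n := by
  induction n with
  | zero => simp
  | succ n ih =>
    rw [pow_succ, commutatorElement_mul_left_eq_conj_mul, Subgroup.mem_center_iff.1 h,
      mul_inv_cancel_right, ih, ← pow_succ']

lemma mul_mul_mul_eq_commutatorElement_mul {a a' b b' : G}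
    (h : ⁅b, a'⁆ ∈ Subgroup.center G) : a * b * (a' * b') = ⁅b, a'⁆ * (a * a' * (b * b')) := by
  calc a * b * (a' * b') = a * ⁅b, a'⁆ * (a' * b * b') := by
        rw [commutatorElement_def]; group
    _ = ⁅b, a'⁆ * (a * a' * (b * b')) := by
        rw [Subgroup.mem_center_iff.1 h]; simp only [mul_assoc]

lemma commute_mul_mul_iff_commutatorElement_eq {a a' b b' : G} (ha : Commute a a')
    (hb : Commute b b') (h : ⁅b, a'⁆ ∈ Subgroup.center G) (h' : ⁅b', a⁆ ∈ Subgroup.center G) :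
    Commute (a * b) (a' * b') ↔ ⁅b, a'⁆ = ⁅b', a⁆ := by
  rw [commute_iff_eq, mul_mul_mul_eq_commutatorElement_mul h,
    mul_mul_mul_eq_commutatorElement_mul h', ha.eq, hb.eq, mul_left_inj]

lemma commute_mul_pow_mul_pow {a a' b b' : G} (ha : Commute a a') (hb : Commute b b')
    (h : ⁅b, a'⁆ ∈ Subgroup.center G) (h' : ⁅b', a⁆ ∈ Subgroup.center G)
    (hab : Commute (a * b) (a' * b')) (i : ℕ) : Commute (a * b ^ i) (a' * b' ^ i) := by
  have hi := commutatorElement_pow_left h i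
  have hi' := commutatorElement_pow_left h' i
  rw [commute_mul_mul_iff_commutatorElement_eq ha (hb.pow_pow i i)
    (hi ▸ Subgroup.pow_mem _ h i) (hi' ▸ Subgroup.pow_mem _ h' i), hi, hi',
    (commute_mul_mul_iff_commutatorElement_eq ha hb h h').1 hab]

/-- The subgroup generated by the products `a * b ^ i` with `a ∈ A`, `b ∈ B` and `a * b ∈ C`. When
`G/Z = A/Z × B/Z` and `C/Z` is the graph of a homomorphism `φ : A/Z → B/Z`, it is the preimage in
`G` of the graph of the homomorphism `x ↦ φ x ^ i`. -/
def powGraph (A B C : Subgroup G) (i : ℕ) : Subgroup G :=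
  Subgroup.closure {g | ∃ a ∈ A, ∃ b ∈ B, a * b ∈ C ∧ a * b ^ i = g}

variable {A B C : Subgroup G}

lemma mul_pow_mem_powGraph {a b : G} (ha : a ∈ A) (hb : b ∈ B) (hab : a * b ∈ C) (i : ℕ) :
    a * b ^ i ∈ powGraph A B C i :=
  Subgroup.subset_closure ⟨a, ha, b, hb, hab, rfl⟩

lemma isMulCommutative_powGraph [IsMulCommutative A] [IsMulCommutative B] [IsMulCommutative C]
    (hBA : ⁅B, A⁆ ≤ Subgroup.center G) (i : ℕ) : IsMulCommutative (powGraph A B C i) := by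
  apply Subgroup.isMulCommutative_closure
  rintro _ ⟨a, ha, b, hb, hab, rfl⟩ _ ⟨a', ha', b', hb', hab', rfl⟩
  exact commute_mul_pow_mul_pow (setLike_mul_comm ha ha') (setLike_mul_comm hb hb')
    (hBA (Subgroup.commutator_mem_commutator hb ha'))
    (hBA (Subgroup.commutator_mem_commutator hb' ha)) (setLike_mul_comm hab hab') i

lemma inf_le_powGraph (i : ℕ) : A ⊓ C ≤ powGraph A B C i := fun x hx => by
  simpa using mul_pow_mem_powGraph hx.1 B.one_mem (by simpa using hx.2) i

lemma powGraph_mul_eq_univ (hAB : (A : Set G) * (B : Set G) = Set.univ)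
    (hCB : (C : Set G) * (B : Set G) = Set.univ) (i : ℕ) :
    (powGraph A B C i : Set G) * (B : Set G) = Set.univ := by
  refine Set.eq_univ_of_forall fun g => ?_
  obtain ⟨a, ha, b, hb, rfl⟩ := Set.mem_mul.1 (hAB ▸ Set.mem_univ g)
  obtain ⟨c, hc, b', hb', hcb⟩ := Set.mem_mul.1 (hCB ▸ Set.mem_univ a)
  have hab' : a * b'⁻¹ ∈ C := by rwa [← hcb, mul_inv_cancel_right]
  exact Set.mem_mul.2 ⟨a * b'⁻¹ ^ i, mul_pow_mem_powGraph ha (B.inv_mem hb') hab' i, b' ^ i * b,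
    B.mul_mem (B.pow_mem hb' i) hb, by group⟩

lemma pow_sub_mem_powGraph (hAC : (A : Set G) * (C : Set G) = Set.univ) {i j : ℕ} (hij : i ≤ j)
    (h : powGraph A B C i = powGraph A B C j) {b : G} (hb : b ∈ B) :
    b ^ (j - i) ∈ powGraph A B C j := by
  obtain ⟨a, ha, c, hc, rfl⟩ := Set.mem_mul.1 (hAC ▸ Set.mem_univ b)
  have mem_graph (k : ℕ) : a⁻¹ * (a * c) ^ k ∈ powGraph A B C k :=
    mul_pow_mem_powGraph (A.inv_mem ha) hb (by rwa [inv_mul_cancel_left]) k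
  have hmem := Subgroup.mul_mem _ (Subgroup.inv_mem _ (h ▸ mem_graph i)) (mem_graph j)
  rwa [mul_inv_rev, inv_inv, mul_assoc, mul_inv_cancel_left, ← pow_sub_mul_pow _ hij,
    ((Commute.refl (a * c)).pow_pow _ _).eq, inv_mul_cancel_left] at hmem

lemma isMulCommutative_of_mem_abelianAtoms (hA : A ∈ abelianAtoms G) : IsMulCommutative A :=
  ⟨⟨hA.2.2.2⟩⟩

lemma center_lt_top_of_mem_abelianAtoms (hA : A ∈ abelianAtoms G) : Subgroup.center G < ⊤ :=
  hA.2.1.trans hA.2.2.1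

lemma CDmeasure_top :
    CDmeasure (⊤ : Subgroup G) = Nat.card G * Nat.card (Subgroup.center G) := by
  rw [CDmeasure, Subgroup.coe_top, Subgroup.centralizer_univ, Subgroup.card_top]

namespace IsQACD

variable {K L : Subgroup G} {w : ℕ}

lemma center_le (hG : IsQACD G w) (hK : inCD K) : Subgroup.center G ≤ K :=
  hG.2.2.1 K hK

lemma eq_of_le (hG : IsQACD G w) (hK : inCD K) (hL : inCD L) (hZK : Subgroup.center G < K)
    (hKL : K ≤ L) (hL_top : L < ⊤) : K = L :=
  hG.2.2.2.1 K L hK hL hZK hKL hL_top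

lemma inCD_of_le_CDmeasure (hG : IsQACD G w)
    (hK : Nat.card G * Nat.card (Subgroup.center G) ≤ CDmeasure K) : inCD K :=
  fun H => (hG.1 H).trans (CDmeasure_top.trans_le hK)

end IsQACD

end

section

variable {G : Type*} [Group G] [Finite G] {A B C D K : Subgroup G} {w : ℕ}

lemma inCD_centralizer (hK : inCD K) : inCD (Subgroup.centralizer (K : Set G)) := by
  refine fun L => (hK L).trans ?_
  rw [CDmeasure, CDmeasure, mul_comm]
  exact Nat.mul_le_mul_left _
    (Subgroup.card_le_of_le (Subgroup.le_centralizer_iff.1 le_rfl))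

namespace IsQACD

lemma centralizer_eq_self (hG : IsQACD G w) (hA : A ∈ abelianAtoms G) :
    Subgroup.centralizer (A : Set G) = A := by
  have := isMulCommutative_of_mem_abelianAtoms hA
  have centralizer_lt_top : Subgroup.centralizer (A : Set G) < ⊤ := by
    rw [lt_top_iff_ne_top, Ne, Subgroup.centralizer_eq_top_iff_subset]
    exact hA.2.1.not_ge
  exact (hG.eq_of_le hA.1 (inCD_centralizer hA.1) hA.2.1 A.le_centralizer centralizer_lt_top).symm

lemma card_mul_self (hG : IsQACD G w) (hA : A ∈ abelianAtoms G) :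
    Nat.card A * Nat.card A = Nat.card G * Nat.card (Subgroup.center G) := by
  have hmeasure : CDmeasure A = CDmeasure ⊤ := le_antisymm (hG.1 A) (hA.1 ⊤)
  rwa [CDmeasure_top, CDmeasure, hG.centralizer_eq_self hA] at hmeasure

lemma card_eq_card (hG : IsQACD G w) (hA : A ∈ abelianAtoms G) (hB : B ∈ abelianAtoms G) :
    Nat.card A = Nat.card B :=
  Nat.mul_self_inj.1 ((hG.card_mul_self hA).trans (hG.card_mul_self hB).symm)

lemma mem_abelianAtoms_of_card_le [IsMulCommutative K] (hG : IsQACD G w)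
    (hne : Subgroup.center G < ⊤)
    (hcard : Nat.card G * Nat.card (Subgroup.center G) ≤ Nat.card K * Nat.card K) :
    K ∈ abelianAtoms G := by
  have hK : inCD K := hG.inCD_of_le_CDmeasure
    (hcard.trans (Nat.mul_le_mul_left _ (Subgroup.card_le_of_le K.le_centralizer)))
  refine ⟨hK, (hG.center_le hK).lt_of_ne ?_, lt_top_iff_ne_top.2 ?_, mul_comm'⟩
  · rintro rfl
    exact hne.ne (Subgroup.eq_top_of_le_card _ (Nat.le_of_mul_le_mul_right hcard Nat.card_pos))
  · rintro rfl
    have htop := (⊤ : Subgroup G).le_centralizer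
    rw [Subgroup.coe_top, Subgroup.centralizer_univ] at htop
    exact hne.not_ge htop

lemma inf_eq_center (hG : IsQACD G w) (hA : A ∈ abelianAtoms G) (hB : B ∈ abelianAtoms G)
    (hAB : A ≠ B) : A ⊓ B = Subgroup.center G := by
  have := isMulCommutative_of_mem_abelianAtoms hA
  have := isMulCommutative_of_mem_abelianAtoms hB
  have hinf : inCD (A ⊓ B) := hG.inCD_of_le_CDmeasure <| calc
    Nat.card G * Nat.card (Subgroup.center G) = Nat.card A * Nat.card B := by
      rw [← hG.card_mul_self hA, hG.card_eq_card hA hB]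
    _ = ((A : Set G) * (B : Set G)).ncard * Nat.card ↥(A ⊓ B) :=
      card_mul_card_eq_ncard_mul_mul_card_inf A B
    _ ≤ CDmeasure (A ⊓ B) := by
      rw [CDmeasure, mul_comm]
      exact Nat.mul_le_mul_left _
        (Set.ncard_le_ncard (mul_subset_centralizer_inf A B) (Set.toFinite _))
  by_contra hne
  have hlt := (hG.center_le hinf).lt_of_ne' hne
  exact hAB ((hG.eq_of_le hinf hA.1 hlt inf_le_left hA.2.2.1).symm.trans
    (hG.eq_of_le hinf hB.1 hlt inf_le_right hB.2.2.1))

lemma mul_eq_univ (hG : IsQACD G w) (hA : A ∈ abelianAtoms G) (hB : B ∈ abelianAtoms G)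
    (hAB : A ≠ B) : (A : Set G) * (B : Set G) = Set.univ := by
  have hcard := card_mul_card_eq_ncard_mul_mul_card_inf A B
  rw [hG.inf_eq_center hA hB hAB, ← hG.card_eq_card hA hB, hG.card_mul_self hA] at hcard
  exact (Set.eq_univ_iff_ncard _).2 (Nat.eq_of_mul_eq_mul_right Nat.card_pos hcard).symm

lemma mem_abelianAtoms_of_mul_eq_univ [IsMulCommutative D] (hG : IsQACD G w)
    (hB : B ∈ abelianAtoms G) (hD : Subgroup.center G ≤ D)
    (hDB : (D : Set G) * (B : Set G) = Set.univ) : D ∈ abelianAtoms G := by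
  have hcard : Nat.card B * Nat.card B ≤ Nat.card D * Nat.card B := by
    rw [card_mul_card_eq_ncard_mul_mul_card_inf D B, hDB, Set.ncard_univ, hG.card_mul_self hB]
    exact Nat.mul_le_mul_left _ (Subgroup.card_le_of_le (le_inf hD hB.2.1.le))
  have hBD : Nat.card B ≤ Nat.card D := Nat.le_of_mul_le_mul_right hcard Nat.card_pos
  refine hG.mem_abelianAtoms_of_card_le (center_lt_top_of_mem_abelianAtoms hB) ?_
  exact hG.card_mul_self hB ▸ Nat.mul_le_mul hBD hBD

lemma normal (hG : IsQACD G w) (hA : A ∈ abelianAtoms G) : A.Normal := by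
  have := isMulCommutative_of_mem_abelianAtoms hA
  refine Subgroup.normal_iff_map_conj_eq.2 fun g => ?_
  have hconj : A.map (MulAut.conj g).toMonoidHom ∈ abelianAtoms G := by
    refine hG.mem_abelianAtoms_of_card_le (center_lt_top_of_mem_abelianAtoms hA) ?_
    rw [Subgroup.card_map_of_injective (MulAut.conj g).injective, hG.card_mul_self hA]
  by_contra hne
  exact hne (Subgroup.conj_smul_eq_self_of_mem
    (mem_of_mul_map_conj_eq_univ (hG.mul_eq_univ hA hconj (Ne.symm hne))))

lemma commutator_le_center (hG : IsQACD G w) (hA : A ∈ abelianAtoms G)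
    (hB : B ∈ abelianAtoms G) (hAB : A ≠ B) : ⁅A, B⁆ ≤ Subgroup.center G := by
  have := hG.normal hA
  have := hG.normal hB
  exact (Subgroup.commutator_le_inf A B).trans (hG.inf_eq_center hA hB hAB).le

lemma powGraph_mem_abelianAtoms (hG : IsQACD G w) (hA : A ∈ abelianAtoms G)
    (hB : B ∈ abelianAtoms G) (hC : C ∈ abelianAtoms G) (hAB : A ≠ B) (hBC : B ≠ C) (i : ℕ) :
    powGraph A B C i ∈ abelianAtoms G := by
  have := isMulCommutative_of_mem_abelianAtoms hA
  have := isMulCommutative_of_mem_abelianAtoms hB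
  have := isMulCommutative_of_mem_abelianAtoms hC
  have := isMulCommutative_powGraph (C := C) (hG.commutator_le_center hB hA hAB.symm) i
  exact hG.mem_abelianAtoms_of_mul_eq_univ hB
    ((le_inf hA.2.1.le hC.2.1.le).trans (inf_le_powGraph i))
    (powGraph_mul_eq_univ (hG.mul_eq_univ hA hB hAB) (hG.mul_eq_univ hC hB hBC.symm) i)

lemma not_le_powGraph (hG : IsQACD G w) (hA : A ∈ abelianAtoms G)
    (hB : B ∈ abelianAtoms G) (hC : C ∈ abelianAtoms G) (hAB : A ≠ B) (hBC : B ≠ C) (i : ℕ) :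
    ¬ B ≤ powGraph A B C i :=
  not_le_of_mul_eq_univ (hG.powGraph_mem_abelianAtoms hA hB hC hAB hBC i).2.2.1.ne
    (powGraph_mul_eq_univ (hG.mul_eq_univ hA hB hAB) (hG.mul_eq_univ hC hB hBC.symm) i)

lemma powGraph_injOn (hG : IsQACD G w) (hA : A ∈ abelianAtoms G) (hB : B ∈ abelianAtoms G)
    (hC : C ∈ abelianAtoms G) (hAB : A ≠ B) (hAC : A ≠ C) (hBC : B ≠ C) :
    Set.InjOn (powGraph A B C) (Set.Iio (Nat.card (G ⧸ Subgroup.center G)).minFac) := by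
  intro i hi j hj heq
  by_contra hne
  wlog hij : i < j generalizing i j
  · exact this hj hi heq.symm (Ne.symm hne) (lt_of_le_of_ne (not_lt.1 hij) (Ne.symm hne))
  have hcop := Nat.coprime_of_lt_minFac (Nat.sub_ne_zero_of_lt hij)
    ((Nat.sub_le j i).trans_lt hj)
  have center_le := (hG.powGraph_mem_abelianAtoms hA hB hC hAB hBC j).2.1.le
  exact hG.not_le_powGraph hA hB hC hAB hBC j fun b hb =>
    mem_of_pow_mem_of_pow_mem_of_coprime hcop
      (center_le ((Subgroup.center G).pow_index_mem b))
      (pow_sub_mem_powGraph (hG.mul_eq_univ hA hC hAC) hij.le heq hb)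

end IsQACD

theorem stmt13_general (hG : IsQACD G w) (ht : 3 ≤ (abelianAtoms G).ncard) :
    (Nat.card (G ⧸ Subgroup.center G)).minFac + 1 ≤ (abelianAtoms G).ncard := by
  obtain ⟨A, B, C, hA, hB, hC, hAB, hAC, hBC⟩ := (Set.two_lt_ncard_iff).1 ht
  set q := (Nat.card (G ⧸ Subgroup.center G)).minFac
  have B_notMem : B ∉ powGraph A B C '' Set.Iio q := by
    rintro ⟨i, -, hi⟩
    exact hG.not_le_powGraph hA hB hC hAB hBC i hi.ge
  have subset_atoms : insert B (powGraph A B C '' Set.Iio q) ⊆ abelianAtoms G := by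
    rintro _ (rfl | ⟨i, -, rfl⟩)
    exacts [hB, hG.powGraph_mem_abelianAtoms hA hB hC hAB hBC i]
  calc q + 1 = (insert B (powGraph A B C '' Set.Iio q)).ncard := by
        rw [Set.ncard_insert_of_notMem B_notMem,
          (hG.powGraph_injOn hA hB hC hAB hAC hBC).ncard_image, Set.ncard_Iio_nat]
    _ ≤ (abelianAtoms G).ncard := Set.ncard_le_ncard subset_atoms

end

/-- for a finite `p`-group `G` with `CD(G)` a quasi-antichain of
width `w ≥ 3`, `G ∈ CD(G)`, and `|G/Z(G)| = p^(2a)`: if the number `t` of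
abelian atoms satisfies `t ≥ 3`, then `t ≥ p + 1`. -/
theorem stmt13 {G : Type*} [Group G] [Finite G] (p : ℕ) (hp : p.Prime)
    (hpG : IsPGroup p G) (w : ℕ) (hw : 3 ≤ w) (hQA : IsQACD G w)
    (a : ℕ) (ha : 0 < a)
    (hcard : Nat.card (G ⧸ Subgroup.center G) = p ^ (2 * a))
    (t : ℕ) (ht : t = (abelianAtoms G).ncard) :
    3 ≤ t → p + 1 ≤ t := by
  intro ht3
  subst ht
  have h := stmt13_general hQA ht3
  rwa [hcard, hp.pow_minFac (by omega)] at h
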